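/- arXiv:2510.26248 — 2 statements merged into one kernel-verified Lean document; each statement's English description precedes it below -/
import Mathlib

section
/- Let (K, ∂) be a differential field of characteristic zero and let k ⊆ L ⊆ K be algebraically closed intermediate fields with trdeg(L/k) finite and with the same constants, i.e. every x ∈ L with ∂x = 0 lies in k. Let Der_Γ(L/k) = {D ∈ Der_k(L) : D(y) = y·D(x) for all (y, x) ∈ Γ(L)}, where Der_k(L) denotes the k-linear derivations of L into itself. Then Der_Γ(L/k) is an L-vector subspace of Der_k(L) and δ(L/k) ≤ dim_L Der_Γ(L/k). -/
/-!
Closure of `Der_Γ(L/k)` under addition and scaling is immediate, since its defining conditions are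
linear in `D`. The inequality is a count of linear conditions; when `dim_ℚ (Γ(L)/Γ(k))` is infinite,
`δ(L/k) = -∞` and there is nothing to prove.

Suppose `g = dim_ℚ (Γ(L)/Γ(k))` is finite and let `x₁, …, xₙ` be algebraically independent elements
of `L` over `k`, `n = trdeg(L/k)`. In characteristic zero there are `k`-derivations `∂/∂xᵢ` of `L`
with `∂xⱼ/∂xᵢ = δᵢⱼ` (`exists_derivation_of_algebraicIndependent`), so `c ↦ ∑ cᵢ ∂/∂xᵢ` embeds `Lⁿ`
into `Der_k(L)`. For a `k`-derivation `D` the map `(y, x) ↦ D y / y - D x` is a homomorphism on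
`L^× × L` that vanishes on `k^× × k`. Every element of `Γ(L)` has a nonzero multiple that is an
integer combination, modulo `Γ(k)`, of a fixed independent family of size `g`
(`exists_gamma_relation`), so membership of `D` in `Der_Γ(L/k)` reduces to the `g` conditions given
by that family (`inDerGamma_of_basis`). Their common kernel in `Lⁿ` has dimension at least `n - g`
by rank-nullity (`le_add_of_rank_le`).
-/

open scoped Classical

noncomputable section

variable {K : Type*} [Field K]

/-- Membership in `Γ(L)` for a subfield `L` of the differential field `(K, der)`:
pairs `(y, x) ∈ L^× × L` with `dery = y·derx`. -/
def GammaMem (der : K → K) (L : Subfield K) (p : Kˣ × K) : Prop :=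
  (p.1 : K) ∈ L ∧ p.2 ∈ L ∧ der (p.1 : K) = (p.1 : K) * der p.2

/-- A family of elements of `Γ(K)` is `ℚ`-linearly independent modulo `Γ(k)`
(equivalently, `ℤ`-linearly independent, since the quotient is torsion-free):
no nontrivial integer combination lies in `Γ(k)`. -/
def GammaIndep (der : K → K) (k : Subfield K) {n : ℕ} (f : Fin n → Kˣ × K) : Prop :=
  ∀ m : Fin n → ℤ,
    GammaMem der k (∏ i, (f i).1 ^ m i, ∑ i, (m i : K) * (f i).2) → m = 0

/-- `dim_ℚ (Γ(L)/Γ(k))` as an extended natural number: the supremum of the sizes of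
finite families of elements of `Γ(L)` that are independent modulo `Γ(k)`. -/
def gammaDim (der : K → K) (k L : Subfield K) : ℕ∞ :=
  ⨆ (n : ℕ) (_ : ∃ f : Fin n → Kˣ × K, (∀ i, GammaMem der L (f i)) ∧ GammaIndep der k f),
    (n : ℕ∞)

/-- A finite family of elements of `K` is algebraically independent over the subfield `k`. -/
def AlgIndepOver (k : Subfield K) {n : ℕ} (x : Fin n → K) : Prop :=
  ∀ P : MvPolynomial (Fin n) K, (∀ m, MvPolynomial.coeff m P ∈ k) →
    MvPolynomial.eval x P = 0 → P = 0

/-- The transcendence degree of `L` over `k` as an extended natural number: the supremum of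
the sizes of finite families of elements of `L` algebraically independent over `k`. -/
def trdegE (k L : Subfield K) : ℕ∞ :=
  ⨆ (n : ℕ) (_ : ∃ x : Fin n → K, (∀ i, x i ∈ L) ∧ AlgIndepOver k x), (n : ℕ∞)

/-- The exponential predimension `δ(L/k) = trdeg(L/k) − dim_ℚ(Γ(L)/Γ(k)) ∈ ℤ ∪ {−∞}`,
with `δ(L/k) = −∞` when the dimension is infinite. -/
def deltaPre (der : K → K) (k L : Subfield K) : WithBot ℤ :=
  if gammaDim der k L = ⊤ then ⊥
  else (((trdegE k L).toNat : ℤ) - ((gammaDim der k L).toNat : ℤ) : ℤ)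

/-- A subfield `k` of `K` is self-sufficient in `K` if `δ(L/k) ≥ 0` for every algebraically
closed intermediate field `L ⊇ k` of finite transcendence degree over `k`. -/
def SelfSufficientIn (der : K → K) (k : Subfield K) : Prop :=
  ∀ L : Subfield K, k ≤ L → IsAlgClosed ↥L → trdegE k L ≠ ⊤ → 0 ≤ deltaPre der k L

end

/-!
STATEMENT 3: For algebraically closed intermediate fields `k ⊆ L ⊆ K` with `trdeg(L/k)`
finite and the same constants, the space
`Der_Γ(L/k) = {D ∈ Der_k(L) : D(y) = y·D(x) for all (y,x) ∈ Γ(L)}` is an `L`-vector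
subspace of `Der_k(L)`, and `δ(L/k) ≤ dim_L Der_Γ(L/k)`.
-/

section
variable {K : Type*} [Field K]

/-- `D : L → L` is a `k`-linear derivation of `L` (additive, Leibniz, vanishing on `k`). -/
def IsRelDer (k L : Subfield K) (D : ↥L → ↥L) : Prop :=
  (∀ a b : ↥L, D (a + b) = D a + D b) ∧
  (∀ a b : ↥L, D (a * b) = a * D b + b * D a) ∧
  (∀ a : ↥L, (a : K) ∈ k → D a = 0)

/-- `D ∈ Der_Γ(L/k)`: a `k`-linear derivation of `L` with `D(y) = y·D(x)` for every
`(y, x) ∈ Γ(L)`. -/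
def InDerGamma (der : K → K) (k L : Subfield K) (D : ↥L → ↥L) : Prop :=
  IsRelDer k L D ∧
  ∀ p : Kˣ × K, (hp : GammaMem der L p) →
    D ⟨(p.1 : K), hp.1⟩ = ⟨(p.1 : K), hp.1⟩ * D ⟨p.2, hp.2.1⟩

end

/-- A finite extended-natural supremum over indices satisfying `P` is attained. -/
theorem iSup_attained (P : ℕ → Prop) (h0 : P 0)
    (h : (⨆ (n : ℕ) (_ : P n), (n : ℕ∞)) ≠ ⊤) :
    ∃ n, P n ∧ (⨆ (n : ℕ) (_ : P n), (n : ℕ∞)) = n := by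
  have e : (⨆ (n : ℕ) (_ : P n), (n : ℕ∞)) = sSup ((fun n : ℕ => (n : ℕ∞)) '' {n | P n}) := by
    rw [sSup_image]; rfl
  rw [e] at h ⊢
  have : Nonempty ((fun n : ℕ => (n : ℕ∞)) '' {n | P n}) := ⟨⟨_, 0, h0, rfl⟩⟩
  obtain ⟨n, hn, hmax⟩ := ENat.sSup_mem_of_nonempty_of_lt_top (lt_top_iff_ne_top.2 h)
  exact ⟨n, hn, hmax.symm⟩

/-- In characteristic zero a derivation of `L` over `k` can take arbitrary prescribed values on an
algebraically independent family. The family is extended to a transcendence basis `s`; the field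
`L` is formally étale over the polynomial ring `k[s]` (a localization followed by a separable
algebraic extension), so `k`-derivations `k[s] → L` extend to `L`. -/
theorem exists_derivation_of_algebraicIndependent {k L : Type*} [Field k] [Field L] [Algebra k L]
    [CharZero k] {n : ℕ} (x : Fin n → L) (hx : AlgebraicIndependent k x) (c : Fin n → L) :
    ∃ D : Derivation k L L, ∀ i, D (x i) = c i := by
  obtain ⟨s, hxs, hs⟩ := exists_isTranscendenceBasis_superset hx.to_subtype_range
  let v : s → L := Subtype.val
  have hv : AlgebraicIndependent k v := hs.1
  let A := MvPolynomial s k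
  let : Algebra A L := (MvPolynomial.aeval v).toAlgebra
  have halg : ∀ a : A, algebraMap A L a = MvPolynomial.aeval v a := fun _ => rfl
  have : IsScalarTower k A L := IsScalarTower.of_algebraMap_eq fun r => by
    rw [halg, MvPolynomial.algebraMap_eq, MvPolynomial.aeval_C]
  have : FaithfulSMul A L := (faithfulSMul_iff_algebraMap_injective A L).2 hv
  let : Algebra (FractionRing A) L := FractionRing.liftAlgebra A L
  have : IsScalarTower A (FractionRing A) L := FractionRing.isScalarTower_liftAlgebra A L
  have : CharZero A := charZero_of_injective_algebraMap (MvPolynomial.C_injective s k)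
  have : CharZero (FractionRing A) :=
    charZero_of_injective_algebraMap (IsFractionRing.injective A (FractionRing A))
  have : Algebra.IsAlgebraic A L :=
    hs.isAlgebraic_iff.2 fun t => by
      have ht : (t : L) = algebraMap A L (MvPolynomial.X t) := by
        rw [halg, MvPolynomial.aeval_X]
      rw [ht]
      exact isAlgebraic_algebraMap _
  have : Algebra.IsAlgebraic (FractionRing A) L :=
    (IsFractionRing.comap_isAlgebraic_iff (A := A) (K := FractionRing A) (C := L)).1 inferInstance
  have : Algebra.FormallyEtale A (FractionRing A) :=
    Algebra.FormallyEtale.of_isLocalization (nonZeroDivisors A)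
  have : Algebra.FormallyEtale (FractionRing A) L := Algebra.FormallyEtale.of_isSeparable _ _
  have : Algebra.FormallyEtale A L := Algebra.FormallyEtale.comp A (FractionRing A) L
  let f : s → L := fun t => Function.extend x c 0 t
  let d : Derivation k A L := MvPolynomial.mkDerivation k f
  let l : Ω[L⁄k] →ₗ[L] L :=
    (d.liftKaehlerDifferential.liftBaseChange L) ∘ₗ
      (KaehlerDifferential.tensorKaehlerEquivOfFormallyEtale k A L).symm.toLinearMap
  refine ⟨l.compDer (KaehlerDifferential.D k L), fun i => ?_⟩
  have hxi : x i = algebraMap A L (MvPolynomial.X ⟨x i, hxs ⟨i, rfl⟩⟩) := by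
    rw [halg, MvPolynomial.aeval_X]
  have key : ∀ a : A, l (KaehlerDifferential.D k L (algebraMap A L a)) = d a := by
    intro a
    simp [l, KaehlerDifferential.tensorKaehlerEquivOfFormallyEtale_symm_D_algebraMap]
  calc l (KaehlerDifferential.D k L (x i))
      = d (MvPolynomial.X ⟨x i, hxs ⟨i, rfl⟩⟩) := by rw [← key, ← hxi]
    _ = c i := by
      exact (MvPolynomial.mkDerivation_X k f _).trans (hx.injective.extend_apply c 0 i)

theorem Derivation.map_zpow_eq {k L : Type*} [Field k] [Field L] [Algebra k L]
    (D : Derivation k L L) (y : L) (hy : y ≠ 0) (m : ℤ) :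
    D (y ^ m) = y ^ m * (m * (D y / y)) := by
  rw [Derivation.leibniz_zpow, zpow_sub_one₀ hy]
  simp only [smul_eq_mul, zsmul_eq_mul]
  field_simp

/-- The logarithmic derivative turns products of integer powers into integer combinations. -/
theorem Derivation.map_prod_zpow_eq {k L ι : Type*} [Field k] [Field L] [Algebra k L]
    (D : Derivation k L L) (s : Finset ι) (y : ι → L) (hy : ∀ i, y i ≠ 0) (m : ι → ℤ) :
    D (∏ i ∈ s, y i ^ m i) = (∏ i ∈ s, y i ^ m i) * ∑ i ∈ s, m i * (D (y i) / y i) := by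
  induction s using Finset.induction_on with
  | empty => simp
  | insert a s ha ih =>
    rw [Finset.prod_insert ha, Finset.sum_insert ha, Derivation.leibniz, ih,
      D.map_zpow_eq _ (hy a)]
    simp only [smul_eq_mul]
    ring

/-- If `(∏ yᵢ ^ mᵢ, ∑ mᵢ xᵢ)` consists of constants of `D`, the forms `dyᵢ / yᵢ - dxᵢ`, evaluated
at `D`, satisfy the corresponding linear relation. -/
theorem Derivation.sum_logForm_eq_zero {k L ι : Type*} [Field k] [Field L] [Algebra k L]
    [Fintype ι] (D : Derivation k L L) (y x : ι → L) (hy : ∀ i, y i ≠ 0) (m : ι → ℤ)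
    (h₁ : D (∏ i, y i ^ m i) = 0) (h₂ : D (∑ i, (m i : L) * x i) = 0) :
    ∑ i, (m i : L) * (D (y i) / y i - D (x i)) = 0 := by
  rw [D.map_prod_zpow_eq _ _ hy] at h₁
  have h₃ : ∑ i, (m i : L) * (D (y i) / y i) = 0 :=
    (mul_eq_zero.1 h₁).resolve_left
      (Finset.prod_ne_zero_iff.2 fun i _ => zpow_ne_zero _ (hy i))
  have h₄ : ∑ i, (m i : L) * D (x i) = 0 := by
    rw [← h₂, map_sum]
    refine Finset.sum_congr rfl fun i _ => ?_
    rw [Derivation.leibniz, Derivation.map_intCast]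
    simp
  simp only [mul_sub, Finset.sum_sub_distrib, h₃, h₄, sub_zero]

theorem AlgIndepOver.algebraicIndependent {K : Type*} [Field K] {k L : Subfield K} (hkL : k ≤ L)
    {n : ℕ} {x : Fin n → K} (hxL : ∀ i, x i ∈ L) (hx : AlgIndepOver k x) :
    letI : Algebra k L := (Subfield.inclusion hkL).toAlgebra
    AlgebraicIndependent k (fun i => (⟨x i, hxL i⟩ : L)) := by
  let : Algebra k L := (Subfield.inclusion hkL).toAlgebra
  refine algebraicIndependent_iff.2 fun P hP => ?_
  refine MvPolynomial.map_injective k.subtype Subtype.val_injective ?_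
  rw [map_zero]
  refine hx _ (fun m => by rw [MvPolynomial.coeff_map]; exact (P.coeff m).2) ?_
  have := congrArg L.subtype hP
  rw [map_zero, MvPolynomial.aeval_def, MvPolynomial.eval₂_eq', map_sum] at this
  rw [MvPolynomial.eval_map, MvPolynomial.eval₂_eq', ← this]
  refine Finset.sum_congr rfl fun d _ => ?_
  rw [map_mul, map_prod]
  simp only [map_pow]
  rfl

/-- Some nonzero multiple of any element of `Γ(L)` is an integer combination, modulo `Γ(k)`, of an
independent family of maximal size. -/
theorem exists_gamma_relation {K : Type*} [Field K] {der : K → K} {k L : Subfield K} {g : ℕ}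
    (hg : gammaDim der k L = g) {f : Fin g → Kˣ × K} (hfL : ∀ i, GammaMem der L (f i))
    (hf : GammaIndep der k f) (p : Kˣ × K) (hp : GammaMem der L p) :
    ∃ m : Fin (g + 1) → ℤ, m 0 ≠ 0 ∧
      GammaMem der k (∏ i, ((Fin.cons p f : Fin (g + 1) → Kˣ × K) i).1 ^ m i,
        ∑ i, (m i : K) * ((Fin.cons p f : Fin (g + 1) → Kˣ × K) i).2) := by
  have hnot : ¬ GammaIndep der k (Fin.cons p f : Fin (g + 1) → Kˣ × K) := by
    intro hI
    have hle : ((g + 1 : ℕ) : ℕ∞) ≤ gammaDim der k L :=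
      le_iSup₂_of_le (g + 1) ⟨_, fun i => by cases i using Fin.cases <;> simp [hp, hfL], hI⟩ le_rfl
    rw [hg, Nat.cast_le] at hle
    omega
  unfold GammaIndep at hnot
  push Not at hnot
  obtain ⟨m, hm, hm0⟩ := hnot
  refine ⟨m, fun h0 => hm0 ?_, hm⟩
  have ht : (fun i : Fin g => m i.succ) = 0 := hf _ (by
    rw [Fin.prod_univ_succ, Fin.sum_univ_succ] at hm
    simpa [h0] using hm)
  funext i
  cases i using Fin.cases with
  | zero => exact h0
  | succ i => exact congrFun ht i

/-- A `k`-derivation of `L` compatible with a maximal independent family in `Γ(L)` is compatible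
with all of `Γ(L)`. -/
theorem inDerGamma_of_basis {K : Type*} [Field K] [CharZero K] {der : K → K} {k L : Subfield K}
    (hkL : k ≤ L) {g : ℕ}
    (hg : gammaDim der k L = g) {f : Fin g → Kˣ × K} (hfL : ∀ i, GammaMem der L (f i))
    (hf : GammaIndep der k f) :
    letI : Algebra k L := (Subfield.inclusion hkL).toAlgebra
    ∀ D : Derivation k L L,
    (∀ i, D ⟨(f i).1, (hfL i).1⟩ = ⟨(f i).1, (hfL i).1⟩ * D ⟨(f i).2, (hfL i).2.1⟩) →
    InDerGamma der k L D := by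
  let : Algebra k L := (Subfield.inclusion hkL).toAlgebra
  intro D hD
  have hDk : ∀ a : L, (a : K) ∈ k → D a = 0 := fun a ha => D.map_algebraMap (⟨a, ha⟩ : k)
  refine ⟨⟨fun a b => map_add D a b, fun a b => D.leibniz a b, hDk⟩, fun p hp => ?_⟩
  -- a relation `p ^ m₀ · ∏ fᵢ ^ mᵢ ∈ Γ(k)` with `m₀ ≠ 0`, to which the logarithmic form is applied
  obtain ⟨m, hm0, hm⟩ := exists_gamma_relation hg hfL hf p hp
  set F : Fin (g + 1) → Kˣ × K := Fin.cons p f with hF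
  have hFL : ∀ i, GammaMem der L (F i) := fun i => by
    cases i using Fin.cases <;> simp [hF, hp, hfL]
  let y : Fin (g + 1) → L := fun i => ⟨(F i).1, (hFL i).1⟩
  let x : Fin (g + 1) → L := fun i => ⟨(F i).2, (hFL i).2.1⟩
  have hy : ∀ i, y i ≠ 0 := fun i h => (F i).1.ne_zero (congrArg Subtype.val h)
  have hrel := D.sum_logForm_eq_zero y x hy m
    (hDk _ (by
      have h := hm.1
      rw [Units.coe_prod] at h
      have e : ((∏ i, y i ^ m i : L) : K) = ∏ i, (((F i).1 ^ m i : Kˣ) : K) := by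
        push_cast
        rfl
      rw [e]; exact h))
    (hDk _ (by
      have e : ((∑ i, (m i : L) * x i : L) : K) = ∑ i, (m i : K) * (F i).2 := by
        push_cast
        rfl
      rw [e]; exact hm.2.1))
  have hsucc : ∀ i : Fin g, (m i.succ : L) * (D (y i.succ) / y i.succ - D (x i.succ)) = 0 := by
    intro i
    have h : D (y i.succ) = y i.succ * D (x i.succ) := hD i
    rw [h, mul_div_cancel_left₀ _ (hy _), sub_self, mul_zero]
  rw [Fin.sum_univ_succ, Finset.sum_eq_zero (fun i _ => hsucc i), add_zero] at hrel
  have h0 := (mul_eq_zero.1 hrel).resolve_left (Int.cast_ne_zero.2 hm0)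
  rw [sub_eq_zero, div_eq_iff (hy 0), mul_comm] at h0
  exact h0

/-- If `n` elements of `L` are algebraically independent over `k` and `dim_ℚ (Γ(L)/Γ(k)) = g`, then
`n ≤ g + dim_L Der_Γ(L/k)`: rank-nullity for the map sending `c ∈ Lⁿ` to the values of the `g` forms
`dyⱼ - yⱼ dxⱼ` on `∑ cᵢ ∂/∂xᵢ`, whose kernel embeds into `Der_Γ(L/k)`. -/
theorem le_add_of_rank_le {K : Type*} [Field K] [CharZero K] {der : K → K} {k L : Subfield K}
    (hkL : k ≤ L) {g n m : ℕ}
    (hg : gammaDim der k L = g) {f : Fin g → Kˣ × K} (hfL : ∀ i, GammaMem der L (f i))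
    (hf : GammaIndep der k f) {x : Fin n → K} (hxL : ∀ i, x i ∈ L) (hx : AlgIndepOver k x)
    (hm : Module.rank L (Submodule.span L {D : L → L | InDerGamma der k L D}) ≤ m) :
    n ≤ g + m := by
  let : Algebra k L := (Subfield.inclusion hkL).toAlgebra
  let X : Fin n → L := fun i => ⟨x i, hxL i⟩
  have hX : AlgebraicIndependent k X := hx.algebraicIndependent hkL hxL
  -- the dual system of derivations `∂/∂xᵢ`
  choose E hE using fun i : Fin n =>
    exists_derivation_of_algebraicIndependent X hX (Pi.single i (1 : L))
  let y : Fin g → L := fun j => ⟨(f j).1, (hfL j).1⟩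
  let z : Fin g → L := fun j => ⟨(f j).2, (hfL j).2.1⟩
  let Ψ : (Fin n → L) →ₗ[L] Derivation k L L := Fintype.linearCombination L E
  let ev : Derivation k L L →ₗ[L] (L → L) :=
    { toFun := fun D => D, map_add' := fun _ _ => rfl, map_smul' := fun _ _ => rfl }
  let ω : Derivation k L L →ₗ[L] (Fin g → L) :=
    { toFun := fun D j => D (y j) - y j * D (z j)
      map_add' := fun D D' => by
        funext j; simp only [Derivation.add_apply, Pi.add_apply]; ring
      map_smul' := fun c D => by
        funext j
        simp only [Derivation.smul_apply, Pi.smul_apply, smul_eq_mul, RingHom.id_apply]; ring }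
  have hinj : Function.Injective (ev ∘ₗ Ψ) := by
    intro c b h
    funext i
    have hval : ∀ c : Fin n → L, (ev ∘ₗ Ψ) c (X i) = c i := by
      intro c
      change Fintype.linearCombination L E c (X i) = c i
      have h₀ : ∀ (s : Finset (Fin n)),
          (∑ j ∈ s, c j • E j) (X i) = ∑ j ∈ s, c j * E j (X i) := fun s =>
        map_sum (⟨⟨fun D => D (X i), rfl⟩, fun _ _ => rfl⟩ : Derivation k L L →+ L) _ _
      rw [Fintype.linearCombination_apply, h₀]
      simp [hE, Pi.single_apply]
    rw [← hval c, h, hval b]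
  have hker : ∀ c ∈ LinearMap.ker (ω ∘ₗ Ψ), InDerGamma der k L ((ev ∘ₗ Ψ) c) := by
    intro c hc
    refine inDerGamma_of_basis hkL hg hfL hf (Ψ c) fun j => ?_
    exact sub_eq_zero.1 (congrFun (LinearMap.mem_ker.1 hc) j)
  have hle : (LinearMap.ker (ω ∘ₗ Ψ)).map (ev ∘ₗ Ψ) ≤
      Submodule.span L {D : L → L | InDerGamma der k L D} := by
    rintro _ ⟨c, hc, rfl⟩
    exact Submodule.subset_span (hker c hc)
  have h₁ : Module.finrank L (LinearMap.ker (ω ∘ₗ Ψ)) ≤ m := by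
    have h₂ := (Submodule.rank_mono hle).trans hm
    rw [← Nat.cast_le (α := Cardinal), Module.finrank_eq_rank,
      LinearEquiv.rank_eq (Submodule.equivMapOfInjective (ev ∘ₗ Ψ) hinj _)]
    exact h₂
  have h₃ := LinearMap.finrank_range_add_finrank_ker (ω ∘ₗ Ψ)
  have h₄ := Submodule.finrank_le (LinearMap.range (ω ∘ₗ Ψ))
  simp only [Module.finrank_fintype_fun_eq_card, Fintype.card_fin] at h₃ h₄
  omega

set_option synthInstance.maxHeartbeats 1000000 in
theorem stmt3 {K : Type*} [Field K] [CharZero K]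
    (der : K → K)
    (hadd : ∀ a b : K, der (a + b) = der a + der b)
    (hmul : ∀ a b : K, der (a * b) = a * der b + b * der a)
    (k L : Subfield K) (hkL : k ≤ L)
    (hkalg : IsAlgClosed ↥k) (hLalg : IsAlgClosed ↥L)
    (hfin : trdegE k L ≠ ⊤)
    (hconst : ∀ x ∈ L, der x = 0 → x ∈ k) :
    -- Der_Γ(L/k) is an L-vector subspace of Der_k(L):
    (InDerGamma der k L (0 : ↥L → ↥L)) ∧
    (∀ D D' : ↥L → ↥L, InDerGamma der k L D → InDerGamma der k L D' →
      InDerGamma der k L (D + D')) ∧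
    (∀ (c : ↥L) (D : ↥L → ↥L), InDerGamma der k L D → InDerGamma der k L (c • D)) ∧
    -- δ(L/k) ≤ dim_L Der_Γ(L/k):
    (∀ m : ℕ,
      Module.rank ↥L ↥(Submodule.span ↥L {D : ↥L → ↥L | InDerGamma der k L D}) ≤ m →
      deltaPre der k L ≤ ((m : ℤ) : WithBot ℤ)) := by
  refine ⟨⟨⟨?_, ?_, ?_⟩, ?_⟩, ?_, ?_, ?_⟩
  · intro a b; simp
  · intro a b; simp
  · intro a _; simp
  · intro p hp; simp
  · intro D D' hD hD'
    refine ⟨⟨fun a b => ?_, fun a b => ?_, fun a ha => ?_⟩, fun p hp => ?_⟩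
    · simp only [Pi.add_apply, hD.1.1, hD'.1.1]; ring
    · simp only [Pi.add_apply, hD.1.2.1, hD'.1.2.1]; ring
    · simp only [Pi.add_apply, hD.1.2.2 a ha, hD'.1.2.2 a ha, add_zero]
    · simp only [Pi.add_apply, hD.2 p hp, hD'.2 p hp]; ring
  · intro c D hD
    refine ⟨⟨fun a b => ?_, fun a b => ?_, fun a ha => ?_⟩, fun p hp => ?_⟩
    · simp only [Pi.smul_apply, smul_eq_mul, hD.1.1]; ring
    · simp only [Pi.smul_apply, smul_eq_mul, hD.1.2.1]; ring
    · simp only [Pi.smul_apply, smul_eq_mul, hD.1.2.2 a ha, mul_zero]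
    · simp only [Pi.smul_apply, smul_eq_mul, hD.2 p hp]; ring
  · intro m hm
    by_cases htop : gammaDim der k L = ⊤
    · simp [deltaPre, htop]
    obtain ⟨n, ⟨x, hxL, hx⟩, hn⟩ := iSup_attained
      (fun n => ∃ x : Fin n → K, (∀ i, x i ∈ L) ∧ AlgIndepOver k x)
      ⟨Fin.elim0, fun i => i.elim0, fun P _ hP => by
        rw [MvPolynomial.eq_C_of_isEmpty P, MvPolynomial.eval_C] at hP
        rw [MvPolynomial.eq_C_of_isEmpty P, hP, map_zero]⟩ hfin
    obtain ⟨g, ⟨f, hfL, hf⟩, hg⟩ := iSup_attained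
      (fun n => ∃ f : Fin n → Kˣ × K, (∀ i, GammaMem der L (f i)) ∧ GammaIndep der k f)
      ⟨Fin.elim0, fun i => i.elim0, fun m _ => Subsingleton.elim _ _⟩ htop
    have hle := le_add_of_rank_le hkL hg hfL hf hxL hx hm
    change trdegE k L = n at hn
    change gammaDim der k L = g at hg
    rw [deltaPre, if_neg htop, hn, hg, WithBot.coe_le_coe]
    simp only [ENat.toNat_natCast]
    omega
end

section
/- Let (K, ∂) be a differential field of characteristic zero, let k be an algebraically closed intermediate field that is self-sufficient in K, and let L be an algebraically closed intermediate field with k ⊆ L ⊆ K, trdeg(L/k) finite and δ(L/k) = 0. Then L is self-sufficient in K. -/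
/-!
Both ingredients of `δ` behave well in a tower `k ⊆ L ⊆ M`: the transcendence degree is additive
(`trdegE_add`, transported from Mathlib's `Algebra.trdeg` of the corresponding extensions), and
`dim Γ(L)/Γ(k) + dim Γ(M)/Γ(L) ≤ dim Γ(M)/Γ(k)` (`gammaDim_add_le`), because concatenating
independent families keeps them independent. Hence `δ(M/L) ≥ δ(M/k) - δ(L/k) = δ(M/k) ≥ 0`, where
`trdeg(M/k)` is finite, so that self-sufficiency of `k` applies to `M`, and finiteness of
`dim Γ(M)/Γ(k)` forces that of `dim Γ(M)/Γ(L)`.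
-/

open scoped Classical

section

variable {K : Type*} [Field K]

/-- `Γ(L)`, as a subgroup of `K^× × K` (the additive factor being written multiplicatively). -/
def gammaGroup (der : K → K)
    (hadd : ∀ a b : K, der (a + b) = der a + der b)
    (hmul : ∀ a b : K, der (a * b) = a * der b + b * der a) (L : Subfield K) :
    Subgroup (Kˣ × Multiplicative K) where
  carrier := {p | GammaMem der L (p.1, p.2.toAdd)}
  one_mem' := by
    have h1 : der 1 = 0 := by simpa using hmul 1 1
    have h0 : der 0 = 0 := by simpa using hadd 0 0
    simp [GammaMem, h1, h0, L.one_mem, L.zero_mem]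
  mul_mem' := by
    rintro ⟨a, x⟩ ⟨b, y⟩ ⟨ha, hx, hd⟩ ⟨hb, hy, he⟩
    refine ⟨by simpa using L.mul_mem ha hb, by simpa using L.add_mem hx hy, ?_⟩
    dsimp only at hd he
    simp only [Prod.mk_mul_mk, Units.val_mul, toAdd_mul, hadd, hmul, hd, he]
    ring
  inv_mem' := by
    rintro ⟨a, x⟩ ⟨ha, hx, hd⟩
    have h1 : der 1 = 0 := by simpa using hmul 1 1
    have h0 : der 0 = 0 := by simpa using hadd 0 0
    refine ⟨by simpa using L.inv_mem ha, by simpa using L.neg_mem hx, ?_⟩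
    dsimp only at hd
    have h2 := hmul (a : K) (a : K)⁻¹
    rw [mul_inv_cancel₀ a.ne_zero, h1, hd] at h2
    have h3 := hadd x.toAdd (-x.toAdd)
    rw [add_neg_cancel, h0] at h3
    have h4 : der (-x.toAdd) = -der x.toAdd := by linear_combination -h3
    simp only [Prod.inv_mk, toAdd_inv, Units.val_inv_eq_inv_val, h4]
    apply mul_left_cancel₀ a.ne_zero
    linear_combination -h2

lemma mem_gammaGroup {der : K → K}
    {hadd : ∀ a b : K, der (a + b) = der a + der b}
    {hmul : ∀ a b : K, der (a * b) = a * der b + b * der a} {L : Subfield K} {p : Kˣ × K} :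
    ((p.1, .ofAdd p.2) : Kˣ × Multiplicative K) ∈ gammaGroup der hadd hmul L ↔
      GammaMem der L p :=
  Iff.rfl

/-- The combination in `GammaIndep` is a product of powers in `K^× × Multiplicative K`, so that
membership in `Γ` can be handled with the `Subgroup` API. -/
lemma prod_gamma_zpow {n : ℕ} (f : Fin n → Kˣ × K) (m : Fin n → ℤ) :
    ((∏ i, (f i).1 ^ m i, .ofAdd (∑ i, (m i : K) * (f i).2)) : Kˣ × Multiplicative K) =
      ∏ i, ((f i).1, .ofAdd (f i).2) ^ m i := by
  ext
  · simp [Prod.fst_prod]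
  · apply Multiplicative.toAdd.injective
    simp [Prod.snd_prod, toAdd_prod, toAdd_zpow]

/-- Concatenating a family of `Γ(L)` independent modulo `Γ(k)` with a family of `Γ(M)`
independent modulo `Γ(L)` gives a family of `Γ(M)` independent modulo `Γ(k)`. -/
lemma gammaDim_add_le {der : K → K}
    (hadd : ∀ a b : K, der (a + b) = der a + der b)
    (hmul : ∀ a b : K, der (a * b) = a * der b + b * der a)
    {k L M : Subfield K} (hkL : k ≤ L) (hLM : L ≤ M) :
    gammaDim der k L + gammaDim der L M ≤ gammaDim der k M := by
  have mono : ∀ {A B : Subfield K}, A ≤ B → ∀ {p}, GammaMem der A p → GammaMem der B p :=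
    fun h p hp => ⟨h hp.1, h hp.2.1, hp.2.2⟩
  have key : ∀ a b : ℕ,
      (∃ f : Fin a → Kˣ × K, (∀ i, GammaMem der L (f i)) ∧ GammaIndep der k f) →
      (∃ f : Fin b → Kˣ × K, (∀ i, GammaMem der M (f i)) ∧ GammaIndep der L f) →
      (a : ℕ∞) + b ≤ gammaDim der k M := by
    rintro a b ⟨f, hf, hfi⟩ ⟨g, hg, hgi⟩
    rw [← Nat.cast_add]
    refine le_iSup₂_of_le (a + b) ⟨Fin.append f g, ?_, ?_⟩ le_rfl
    · intro i
      refine Fin.addCases (fun i => ?_) (fun i => ?_) i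
      · simpa using mono hLM (hf i)
      · simpa using hg i
    · intro m hm
      have hm' := (mem_gammaGroup (hadd := hadd) (hmul := hmul)).2 hm
      dsimp only at hm'
      rw [prod_gamma_zpow, Fin.prod_univ_add] at hm'
      simp only [Fin.append_left, Fin.append_right] at hm'
      -- The part with entries in `Γ(L)` can be cancelled modulo `Γ(L)`.
      have hfL : ∏ i, ((f i).1, Multiplicative.ofAdd (f i).2) ^ m (Fin.castAdd b i) ∈
          gammaGroup der hadd hmul L :=
        Subgroup.prod_mem _ fun i _ => Subgroup.zpow_mem _ (hf i) _
      have hgL := (Subgroup.mul_mem_cancel_left _ hfL).1 (mono hkL hm')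
      have hm2 : (fun i => m (Fin.natAdd a i)) = 0 := by
        refine hgi _ ?_
        rw [← prod_gamma_zpow g fun i => m (Fin.natAdd a i)] at hgL
        exact hgL
      have hm2' : ∀ i, m (Fin.natAdd a i) = 0 := fun i => congrFun hm2 i
      simp only [hm2', zpow_zero, Finset.prod_const_one, mul_one] at hm'
      have hm1 : (fun i => m (Fin.castAdd b i)) = 0 := by
        refine hfi _ ?_
        rw [← prod_gamma_zpow f fun i => m (Fin.castAdd b i)] at hm'
        exact hm'
      funext i
      exact Fin.addCases (fun i => congrFun hm1 i) hm2' i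
  have h0 : ∀ A B : Subfield K,
      ∃ f : Fin 0 → Kˣ × K, (∀ i, GammaMem der B (f i)) ∧ GammaIndep der A f :=
    fun A B => ⟨Fin.elim0, fun i => i.elim0, fun m _ => Subsingleton.elim _ _⟩
  unfold gammaDim
  exact ENat.biSup_add_biSup_le' ⟨0, h0 k L⟩ ⟨0, h0 L M⟩ fun a ha b hb => key a b ha hb

lemma algIndepOver_iff (k : Subfield K) {n : ℕ} (x : Fin n → K) :
    AlgIndepOver k x ↔ AlgebraicIndependent k x := by
  rw [algebraicIndependent_iff]
  have hev : ∀ Q : MvPolynomial (Fin n) k,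
      MvPolynomial.eval x (MvPolynomial.map k.subtype Q) = MvPolynomial.aeval x Q := by
    intro Q
    rw [MvPolynomial.eval_map]
    rfl
  have hinj := MvPolynomial.map_injective (σ := Fin n) k.subtype k.subtype.injective
  constructor
  · intro h Q hQ
    apply hinj
    rw [map_zero]
    exact h _ (fun m => by rw [MvPolynomial.coeff_map]; exact (Q.coeff m).2) (by rw [hev, hQ])
  · intro h P hP h0
    obtain ⟨Q, rfl⟩ : P ∈ Set.range (MvPolynomial.map k.subtype) := by
      rw [MvPolynomial.mem_range_map_iff_coeffs_subset]
      intro c hc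
      obtain ⟨m, -, rfl⟩ := MvPolynomial.mem_coeffs_iff.1 (Finset.mem_coe.1 hc)
      exact ⟨⟨_, hP m⟩, rfl⟩
    rw [h Q (by rw [← hev, h0]), map_zero]

lemma trdegE_eq_toENat_trdeg {k L : Subfield K} [Algebra k L] [IsScalarTower k L K] :
    trdegE k L = Cardinal.toENat (Algebra.trdeg k L) := by
  have hx : ∀ {n : ℕ} (x : Fin n → L),
      AlgIndepOver k (fun i => (x i : K)) ↔ AlgebraicIndependent k x := fun x => by
    rw [algIndepOver_iff]
    exact (IsScalarTower.toAlgHom k L K).algebraicIndependent_iff (algebraMap L K).injective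
  apply le_antisymm
  · refine iSup₂_le ?_
    rintro n ⟨x, hxL, hxi⟩
    have h := ((hx fun i => ⟨x i, hxL i⟩).1 hxi).lift_cardinalMk_le_trdeg
    rw [Cardinal.natCast_le_toENat]
    simpa using h
  · rw [← ENat.forall_natCast_le_iff_le]
    intro n hn
    rw [Cardinal.natCast_le_toENat] at hn
    obtain ⟨s, hs⟩ := exists_isTranscendenceBasis k L
    rw [← hs.cardinalMk_eq_trdeg] at hn
    obtain ⟨e⟩ : Nonempty (Fin n ↪ s) := by
      rw [← Cardinal.lift_mk_le']
      simpa using hn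
    exact le_iSup₂_of_le n ⟨fun i => ((e i : L) : K), fun i => (e i : L).2,
      (hx _).2 (hs.1.comp e e.injective)⟩ le_rfl

/-- Additivity of the transcendence degree in a tower. -/
lemma trdegE_add {k L M : Subfield K} (hkL : k ≤ L) (hLM : L ≤ M) :
    trdegE k L + trdegE L M = trdegE k M := by
  let _ : Algebra k L := (Subfield.inclusion hkL).toAlgebra
  let _ : Algebra L M := (Subfield.inclusion hLM).toAlgebra
  let _ : Algebra k M := (Subfield.inclusion (hkL.trans hLM)).toAlgebra
  have : IsScalarTower k L K := .of_algebraMap_eq fun _ => rfl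
  have : IsScalarTower L M K := .of_algebraMap_eq fun _ => rfl
  have : IsScalarTower k M K := .of_algebraMap_eq fun _ => rfl
  have : IsScalarTower k L M := .of_algebraMap_eq fun _ => rfl
  rw [trdegE_eq_toENat_trdeg, trdegE_eq_toENat_trdeg, trdegE_eq_toENat_trdeg, ← map_add,
    trdeg_add_eq]

end

/-!
STATEMENT 6: If `k` is algebraically closed and self-sufficient in `K`, and `L ⊇ k` is
algebraically closed with `trdeg(L/k)` finite and `δ(L/k) = 0`, then `L` is
self-sufficient in `K`.
-/

theorem stmt6 {K : Type*} [Field K] [CharZero K]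
    (der : K → K)
    (hadd : ∀ a b : K, der (a + b) = der a + der b)
    (hmul : ∀ a b : K, der (a * b) = a * der b + b * der a)
    (k L : Subfield K) (hkL : k ≤ L)
    (hkalg : IsAlgClosed ↥k) (hLalg : IsAlgClosed ↥L)
    (hss : SelfSufficientIn der k)
    (hfin : trdegE k L ≠ ⊤)
    (hzero : deltaPre der k L = 0) :
    SelfSufficientIn der L := by
  intro M hLM hM hfinM
  have htr := trdegE_add hkL hLM
  have hga := gammaDim_add_le hadd hmul hkL hLM
  have hpos := hss M (hkL.trans hLM) hM (by
    rw [← htr]; exact WithTop.add_ne_top.2 ⟨hfin, hfinM⟩)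
  unfold deltaPre at hzero hpos ⊢
  split_ifs at hzero with h1
  · simp at hzero
  split_ifs at hpos with h2
  · simp at hpos
  have h3 : gammaDim der L M ≠ ⊤ := ne_top_of_le_ne_top h2 (le_add_self.trans hga)
  rw [if_neg h3]
  rw [← htr, ENat.toNat_add hfin hfinM] at hpos
  have hga' := ENat.toNat_le_toNat hga h2
  rw [ENat.toNat_add h1 h3] at hga'
  rw [WithBot.coe_eq_zero] at hzero
  rw [WithBot.coe_nonneg] at hpos ⊢
  omega
end
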